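/- Let a, b, c ∈ ℂ \ (1/2)ℤ with a+b−c ∈ {0,1,…,n−1}. Then the map Y_c^{a,b} : V^c → V^a ⊗ V^b is a U_ξ(sl_2)-module map, i.e. Y_c^{a,b} ∘ E_c = (E_a ⊗ K_b + K_a^{−1} ⊗ E_b) ∘ Y_c^{a,b}, Y_c^{a,b} ∘ F_c = (F_a ⊗ K_b + K_a^{−1} ⊗ F_b) ∘ Y_c^{a,b}, and Y_c^{a,b} ∘ K_c = (K_a ⊗ K_b) ∘ Y_c^{a,b}. Moreover, if in addition a+b ∉ (1/2)ℤ, then every linear map ι : V^c → V^a ⊗ V^b satisfying these same three intertwining relations (with ι in place of Y_c^{a,b}) is a scalar multiple of Y_c^{a,b}. -/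

import Mathlib

open Complex Finset Filter
open scoped Matrix Kronecker Real

noncomputable section

/-- `ξ^a = exp(π √-1 a / n)` for the `2n`-th root of unity `ξ = exp(π √-1/n)`. -/
def xic (n : ℕ) (a : ℂ) : ℂ := Complex.exp (Real.pi * Complex.I * a / n)

/-- `{a} = ξ^a - ξ^{-a}`. -/
def qn (n : ℕ) (a : ℂ) : ℂ := xic n a - xic n (-a)

/-- `{k}! = {1}{2}⋯{k}`. -/
def qfac (n : ℕ) (k : ℕ) : ℂ := ∏ j ∈ Finset.range k, qn n ((j : ℂ) + 1)

-- The quantum binomial `[a¦b]`, defined (and nonzero) only when `a - b ∈ {0,1,…,n-1}`.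
open Classical in
def qbin (n : ℕ) (a b : ℂ) : ℂ :=
  if h : ∃ k : ℕ, k < n ∧ a - b = (k : ℂ) then
    ∏ j ∈ Finset.range h.choose, qn n (a - (j : ℂ)) / qn n (a - b - (j : ℂ))
  else 0

/-- `[a] = {a}/{1}`. -/
def qint (n : ℕ) (a : ℂ) : ℂ := qn n a / qn n 1

/-- `a` is not a half-integer. -/
def NotHalfInt (a : ℂ) : Prop := ∀ m : ℤ, a ≠ (m : ℂ) / 2

/-- `x ∈ {0, 1, …, n-1}` (as a complex number). -/
def InZn (n : ℕ) (x : ℂ) : Prop := ∃ k : ℕ, k < n ∧ x = (k : ℂ)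

/-- The matrix of `E` on `V^a = ℂ^n`: `E e_j = [j] e_{j-1}` (independent of `a`). -/
def Emat (n : ℕ) : Matrix (Fin n) (Fin n) ℂ :=
  Matrix.of fun i j => if (j : ℕ) = (i : ℕ) + 1 then qint n ((j : ℕ) : ℂ) else 0

/-- The matrix of `F` on `V^a`: `F e_j = [2a-j] e_{j+1}` (with `e_n = 0`). -/
def Fmat (n : ℕ) (a : ℂ) : Matrix (Fin n) (Fin n) ℂ :=
  Matrix.of fun i j => if (i : ℕ) = (j : ℕ) + 1 then qint n (2 * a - ((j : ℕ) : ℂ)) else 0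

/-- The matrix of `K` on `V^a`: `K e_j = ξ^{a-j} e_j`. -/
def Kmat (n : ℕ) (a : ℂ) : Matrix (Fin n) (Fin n) ℂ :=
  Matrix.of fun i j => if i = j then xic n (a - ((i : ℕ) : ℂ)) else 0

/-- The matrix of `K⁻¹` on `V^a`. -/
def Kinvmat (n : ℕ) (a : ℂ) : Matrix (Fin n) (Fin n) ℂ :=
  Matrix.of fun i j => if i = j then xic n (-(a - ((i : ℕ) : ℂ))) else 0

/-- The `R`-matrix `R_{a,b} : V^a ⊗ V^b → V^b ⊗ V^a`:
`R(e_u ⊗ e_v) = Σ_m {m}! ξ^{2(a-u)(b-v) - m(a-b-u+v) - m(m+1)/2} [u¦u-m] [2b-v¦2b-v-m]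
e_{v+m} ⊗ e_{u-m}`; the entry at row `(h,k)`, column `(u,v)` is the coefficient of
`e_h ⊗ e_k`, nonzero only when `h + k = u + v` and `h ≥ v` (with `m = h - v`). -/
def Rmat (n : ℕ) (a b : ℂ) : Matrix (Fin n × Fin n) (Fin n × Fin n) ℂ :=
  Matrix.of fun p q =>
    if ((p.1 : ℕ) + (p.2 : ℕ) = (q.1 : ℕ) + (q.2 : ℕ)) ∧ ((q.2 : ℕ) ≤ (p.1 : ℕ)) then
      (fun m : ℕ =>
        qfac n m *
        xic n (2 * (a - ((q.1 : ℕ) : ℂ)) * (b - ((q.2 : ℕ) : ℂ))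
            - (m : ℂ) * (a - b - ((q.1 : ℕ) : ℂ) + ((q.2 : ℕ) : ℂ))
            - (m : ℂ) * ((m : ℂ) + 1) / 2) *
        qbin n ((q.1 : ℕ) : ℂ) (((q.1 : ℕ) : ℂ) - (m : ℂ)) *
        qbin n (2 * b - ((q.2 : ℕ) : ℂ)) (2 * b - ((q.2 : ℕ) : ℂ) - (m : ℂ)))
      ((p.1 : ℕ) - (q.2 : ℕ))
    else 0

/-- The Clebsch-Gordan quantum coefficient `C^{a,b,c}_{u,v,t}`. -/
def CG (n : ℕ) (a b c : ℂ) (u v t : ℕ) : ℂ :=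
  Complex.exp (Real.pi * Complex.I * (c - a - b) / 2) *
  (-1 : ℂ) ^ ((v : ℤ) - (t : ℤ)) *
  xic n (((v : ℂ) * (2 * b - (v : ℂ) + 1) - (u : ℂ) * (2 * a - (u : ℂ) + 1)) / 2) *
  (qbin n (2 * c) (2 * c - (t : ℂ)))⁻¹ *
  qbin n (2 * c) (a + b + c - ((n : ℂ) - 1)) *
  ∑ z ∈ Finset.range (t + 1),
    (-1 : ℂ) ^ z * xic n ((2 * (z : ℂ) - (t : ℂ)) * (2 * c - (t : ℂ) + 1) / 2) *
    qbin n (a + b - c) ((u : ℂ) - (z : ℂ)) *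
    qbin n (2 * a - (u : ℂ) + (z : ℂ)) (2 * a - (u : ℂ)) *
    qbin n (2 * b - (v : ℂ) + ((t : ℂ) - (z : ℂ))) (2 * b - (v : ℂ))

-- The inclusion `Y_c^{a,b} : V^c → V^a ⊗ V^b`.
open Classical in
def Yinc (n : ℕ) (a b c : ℂ) : Matrix (Fin n × Fin n) (Fin n) ℂ :=
  Matrix.of fun p t =>
    if ((p.1 : ℕ) : ℂ) + ((p.2 : ℕ) : ℂ) - ((t : ℕ) : ℂ) = a + b - c then
      CG n a b c (p.1 : ℕ) (p.2 : ℕ) (t : ℕ)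
    else 0

-- The projection `Y_{a,b}^c : V^a ⊗ V^b → V^c`.
open Classical in
def Yproj (n : ℕ) (a b c : ℂ) : Matrix (Fin n) (Fin n × Fin n) ℂ :=
  Matrix.of fun t p =>
    if ((p.1 : ℕ) : ℂ) + ((p.2 : ℕ) : ℂ) - ((t : ℕ) : ℂ) = a + b - c then
      CG n ((n : ℂ) - 1 - b) ((n : ℂ) - 1 - a) ((n : ℂ) - 1 - c)
        (n - 1 - (p.2 : ℕ)) (n - 1 - (p.1 : ℕ)) (n - 1 - (t : ℕ))
    else 0

-- Extracts the natural number `k` with `x = k` (0 if there is none).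
open Classical in
def natIdx (x : ℂ) : ℕ := if h : ∃ k : ℕ, x = (k : ℂ) then h.choose else 0

/-- The `SL(2,ℂ)` quantum 6j-symbol `{a b e; d c f}_ξ`. -/
def sixj (n : ℕ) (a b e d c f : ℂ) : ℂ :=
  (-1 : ℂ) ^ (n - 1 + natIdx (a + f - c)) *
  (qbin n (2 * f + (n : ℂ)) (2 * f + 1))⁻¹ *
  (qfac n (natIdx (d + e - c)) * qfac n (natIdx (a + b - e)) /
    (qfac n (natIdx (b + d - f)) * qfac n (natIdx (a + f - c)))) *
  qbin n (2 * e) (a + b + e + 1 - (n : ℂ)) *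
  (qbin n (2 * e) (e + c - d))⁻¹ *
  ∑ z ∈ Finset.Icc (natIdx (d + e - c) - natIdx (b + d - f))
      (min (natIdx (d + e - c)) (natIdx (a + f - c))),
    (-1 : ℂ) ^ z * qbin n (a + f + c + 1) (2 * c + (z : ℂ) + 1) *
    qbin n ((a + c - f) + (z : ℂ)) (a + c - f) *
    qbin n ((b + f - d) + (d + e - c) - (z : ℂ)) (b + f - d) *
    qbin n ((d + c - e) + (z : ℂ)) (d + f - b)

/-- The tetrahedral symbol `{a b e; d c f}_tet = {a b e; d c f}_ξ · [2f+n¦2f+1]`. -/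
def sixjtet (n : ℕ) (a b e d c f : ℂ) : ℂ :=
  sixj n a b e d c f * qbin n (2 * f + (n : ℂ)) (2 * f + 1)

/-- The Lobachevsky function `Λ(x) = -∫_0^x log|2 sin t| dt`. -/
def lob (x : ℝ) : ℝ := -∫ t in (0 : ℝ)..x, Real.log |2 * Real.sin t|

/-- A triple of integers is admissible. -/
def Admissible (n : ℕ) (i j k : ℤ) : Prop :=
  0 < i ∧ 0 < j ∧ 0 < k ∧ i < (n : ℤ) - 1 ∧ j < (n : ℤ) - 1 ∧ k < (n : ℤ) - 1 ∧
  (n : ℤ) - 1 < i + j + k ∧ i + j + k < 2 * ((n : ℤ) - 1) ∧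
  0 < i + j - k ∧ 0 < j + k - i ∧ 0 < k + i - j ∧
  i + j - k < (n : ℤ) - 1 ∧ j + k - i < (n : ℤ) - 1 ∧ k + i - j < (n : ℤ) - 1

/-!
Splitting `{z + w} = {z} ξ^{-w} + {w} ξ^z` in the sum over `z + w = t` that defines the
Clebsch–Gordan coefficient, and absorbing `{z}` and `{w}` into the binomials, gives a recurrence
in `t` which says that `Y` intertwines `F`; that `Y` intertwines `K` is the weight condition. As
`[E, F]` is a function of `K`, the defect `Y E - E Y` then commutes with `F`, so it is determined
by its value on `e_0`, which generates `V^c` under `F`; and there it vanishes because `Y e_0` is a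
highest-weight vector. For the same reason every intertwiner is determined by the image of `e_0`,
a highest-weight vector supported on the `e_u ⊗ e_v` with `u + v = a + b - c`, which `E`
determines from its coefficient at `u = 0`. That coefficient is nonzero for `Y`.
-/

/-! ### Quantum numbers -/

lemma xic_zero (n : ℕ) : xic n 0 = 1 := by simp [xic]

lemma xic_add (n : ℕ) (x y : ℂ) : xic n (x + y) = xic n x * xic n y := by
  rw [xic, xic, xic, ← Complex.exp_add]
  ring_nf

lemma xic_ne_zero (n : ℕ) (x : ℂ) : xic n x ≠ 0 := Complex.exp_ne_zero _

lemma xic_neg_mul_self (n : ℕ) (x : ℂ) : xic n (-x) * xic n x = 1 := by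
  rw [← xic_add, neg_add_cancel, xic_zero]

lemma xic_eq_xic_iff {n : ℕ} (hn : n ≠ 0) {x y : ℂ} :
    xic n x = xic n y ↔ ∃ m : ℤ, x = y + 2 * n * m := by
  have hn' : (n : ℂ) ≠ 0 := Nat.cast_ne_zero.mpr hn
  have hpi : (Real.pi : ℂ) ≠ 0 := Complex.ofReal_ne_zero.mpr Real.pi_ne_zero
  rw [xic, xic, Complex.exp_eq_exp_iff_exists_int]
  refine exists_congr fun m => ?_
  field_simp

lemma qn_zero (n : ℕ) : qn n 0 = 0 := by simp [qn]

lemma qn_eq_zero_iff {n : ℕ} (hn : n ≠ 0) {x : ℂ} : qn n x = 0 ↔ ∃ m : ℤ, x = m * n := by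
  rw [qn, sub_eq_zero, xic_eq_xic_iff hn]
  refine exists_congr fun m => ⟨fun h => ?_, fun h => ?_⟩
  · linear_combination h / 2
  · linear_combination 2 * h

lemma qn_self {n : ℕ} (hn : n ≠ 0) : qn n n = 0 :=
  (qn_eq_zero_iff hn).mpr ⟨1, by simp⟩

lemma qn_natCast_ne_zero {n m : ℕ} (hm : 0 < m) (hmn : m < n) : qn n m ≠ 0 := by
  rw [Ne, qn_eq_zero_iff (by omega)]
  rintro ⟨r, hr⟩
  have hr' : (m : ℤ) = r * n := by exact_mod_cast hr
  exact Nat.not_dvd_of_pos_of_lt hm hmn (Int.natCast_dvd_natCast.mp (Dvd.intro_left r hr'.symm))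

lemma qn_natCast_add_one_ne_zero {n m : ℕ} (hmn : m + 1 < n) : qn n (m + 1) ≠ 0 := by
  exact_mod_cast qn_natCast_ne_zero m.succ_pos hmn

lemma qn_one_ne_zero {n : ℕ} (hn : 2 ≤ n) : qn n 1 ≠ 0 := by
  exact_mod_cast qn_natCast_ne_zero one_pos hn

lemma NotHalfInt.qn_two_mul_sub_ne_zero {n : ℕ} (hn : n ≠ 0) {c : ℂ} (hc : NotHalfInt c) (j : ℕ) :
    qn n (2 * c - j) ≠ 0 := by
  rw [Ne, qn_eq_zero_iff hn]
  rintro ⟨r, hr⟩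
  apply hc (r * n + j)
  push_cast
  linear_combination hr / 2

lemma qn_add (n : ℕ) (x y : ℂ) : qn n (x + y) = qn n x * xic n (-y) + qn n y * xic n x := by
  simp only [qn, neg_add, xic_add]
  ring

lemma qn_mul_qn_sub_qn_mul_qn (n : ℕ) (x y : ℂ) :
    qn n (x + 1) * qn n (y - x) - qn n (y - x + 1) * qn n x = qn n 1 * qn n (y - 2 * x) := by
  simp only [qn, mul_sub, sub_mul, ← xic_add]
  ring_nf

lemma qint_zero (n : ℕ) : qint n 0 = 0 := by simp [qint, qn_zero]

lemma qint_self {n : ℕ} (hn : n ≠ 0) : qint n n = 0 := by simp [qint, qn_self hn]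

lemma qint_ne_zero {n : ℕ} (hn : 2 ≤ n) {x : ℂ} (hx : qn n x ≠ 0) : qint n x ≠ 0 :=
  div_ne_zero hx (qn_one_ne_zero hn)

/-! ### Quantum binomials -/

lemma qbin_eq_prod {n m : ℕ} {x y : ℂ} (hm : m < n) (h : x - y = m) :
    qbin n x y = ∏ j ∈ range m, qn n (x - j) / qn n (j + 1) := by
  have hex : ∃ k : ℕ, k < n ∧ x - y = k := ⟨m, hm, h⟩
  have hchoose : hex.choose = m := by exact_mod_cast hex.choose_spec.2.symm.trans h
  rw [qbin, dif_pos hex, hchoose, prod_div_distrib, prod_div_distrib,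
    ← prod_range_reflect (fun j : ℕ => qn n ((j : ℂ) + 1))]
  congr 1
  refine prod_congr rfl fun j hj => ?_
  have hj' : j + 1 ≤ m := mem_range.mp hj
  rw [h, Nat.sub_sub, add_comm 1 j, Nat.cast_sub hj']
  push_cast
  ring_nf

lemma qbin_self {n : ℕ} (hn : n ≠ 0) (x : ℂ) : qbin n x x = 1 := by
  rw [qbin_eq_prod (m := 0) (Nat.pos_of_ne_zero hn) (by simp), prod_range_zero]

lemma qn_mul_qbin {n m : ℕ} {x y : ℂ} (hm : m + 1 < n) (h : x - y = m + 1) :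
    qn n (m + 1) * qbin n x y = qn n (y + 1) * qbin n x (y + 1) := by
  have hne := qn_natCast_add_one_ne_zero hm
  have hx : x - m = y + 1 := by linear_combination h
  rw [qbin_eq_prod hm (by exact_mod_cast h), prod_range_succ, hx,
    qbin_eq_prod (x := x) (y := y + 1) (m := m) (by omega) (by linear_combination h)]
  field_simp

lemma qbin_ne_zero {n m : ℕ} {x y : ℂ} (hm : m < n) (h : x - y = m)
    (hx : ∀ j < m, qn n (x - j) ≠ 0) : qbin n x y ≠ 0 := by
  rw [qbin_eq_prod hm h, prod_ne_zero_iff]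
  intro j hj
  have hj' := mem_range.mp hj
  exact div_ne_zero (hx j hj') (qn_natCast_add_one_ne_zero (by omega))

lemma NotHalfInt.qbin_two_mul_ne_zero {n m : ℕ} {c y : ℂ} (hc : NotHalfInt c) (hm : m < n)
    (h : 2 * c - y = m) : qbin n (2 * c) y ≠ 0 :=
  qbin_ne_zero hm h fun j _ => hc.qn_two_mul_sub_ne_zero (by omega) j

lemma qbin_natCast_zero_ne_zero {n k : ℕ} (hk : k < n) : qbin n k 0 ≠ 0 := by
  refine qbin_ne_zero hk (sub_zero _) fun j hj => ?_
  rw [← Nat.cast_sub hj.le]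
  exact qn_natCast_ne_zero (by omega) (by omega)

lemma qbin_natCast_intCast_eq_zero (n : ℕ) {k : ℕ} {m : ℤ} (h : m < 0 ∨ (k : ℤ) < m) :
    qbin n k m = 0 := by
  by_cases hex : ∃ r : ℕ, r < n ∧ (k : ℂ) - m = r
  · obtain ⟨r, hr, e⟩ := hex
    have e' : (k : ℤ) - m = r := by exact_mod_cast e
    rw [qbin_eq_prod hr e]
    exact prod_eq_zero (i := k) (mem_range.mpr (by omega)) (by simp [qn_zero])
  · rw [qbin, dif_neg hex]

/-! ### Representations of quantum `sl₂` -/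

/-- The operators `E`, `F`, `K` and `L = K⁻¹` on a free module satisfy the defining relations of
the quantum group of `sl₂`, in the normalisation where `K` is a square root of the usual one. The
scalar `d` stands for `(q - q⁻¹)⁻¹`, so that no inverse is needed in the ring of coefficients. -/
structure IsQuantumSl2Rep {R ι : Type*} [CommRing R] [Fintype ι] [DecidableEq ι] (q d : R)
    (E F K L : Matrix ι ι R) : Prop where
  K_mul_L : K * L = 1
  K_mul_E : K * E = q • (E * K)
  F_mul_K : F * K = q • (K * F)
  E_mul_F : E * F = F * E + d • (K * K - L * L)

namespace IsQuantumSl2Rep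

variable {R ι κ : Type*} [CommRing R] [Fintype ι] [DecidableEq ι] [Fintype κ] [DecidableEq κ]
  {q d : R} {E F K L : Matrix ι ι R} {E' F' K' L' : Matrix κ κ R}

lemma L_mul_K (h : IsQuantumSl2Rep q d E F K L) : L * K = 1 := mul_eq_one_comm.mp h.K_mul_L

lemma E_mul_L (h : IsQuantumSl2Rep q d E F K L) : E * L = q • (L * E) :=
  calc E * L = L * (K * E) * L := by rw [← mul_assoc L, h.L_mul_K, one_mul]
    _ = q • (L * E * (K * L)) := by
      rw [h.K_mul_E, mul_smul_comm, smul_mul_assoc, mul_assoc, mul_assoc, mul_assoc]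
    _ = q • (L * E) := by rw [h.K_mul_L, mul_one]

lemma L_mul_F (h : IsQuantumSl2Rep q d E F K L) : L * F = q • (F * L) :=
  calc L * F = L * (F * K) * L := by rw [mul_assoc, mul_assoc, h.K_mul_L, mul_one]
    _ = q • (L * K * (F * L)) := by
      rw [h.F_mul_K, mul_smul_comm, smul_mul_assoc, mul_assoc, mul_assoc, mul_assoc]
    _ = q • (F * L) := by rw [h.L_mul_K, one_mul]

theorem tensor (h : IsQuantumSl2Rep q d E F K L) (h' : IsQuantumSl2Rep q d E' F' K' L') :
    IsQuantumSl2Rep q d (E ⊗ₖ K' + L ⊗ₖ E') (F ⊗ₖ K' + L ⊗ₖ F') (K ⊗ₖ K') (L ⊗ₖ L') where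
  K_mul_L := by
    rw [← Matrix.mul_kronecker_mul, h.K_mul_L, h'.K_mul_L, Matrix.one_kronecker_one]
  K_mul_E := by
    simp only [mul_add, add_mul, ← Matrix.mul_kronecker_mul, h.K_mul_L, h.L_mul_K, h.K_mul_E,
      h'.K_mul_E, Matrix.smul_kronecker, Matrix.kronecker_smul, smul_add]
  F_mul_K := by
    simp only [mul_add, add_mul, ← Matrix.mul_kronecker_mul, h.K_mul_L, h.L_mul_K, h.F_mul_K,
      h'.F_mul_K, Matrix.smul_kronecker, Matrix.kronecker_smul, smul_add]
  E_mul_F := by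
    simp only [mul_add, add_mul, ← Matrix.mul_kronecker_mul, h.E_mul_F, h'.E_mul_F, h.E_mul_L,
      h.L_mul_F, h'.K_mul_E, h'.F_mul_K]
    ext ⟨i, i'⟩ ⟨j, j'⟩
    simp only [Matrix.add_apply, Matrix.sub_apply, Matrix.smul_apply, Matrix.kroneckerMap_apply,
      smul_eq_mul]
    ring

lemma intertwines_L (h : IsQuantumSl2Rep q d E F K L) (h' : IsQuantumSl2Rep q d E' F' K' L')
    {Y : Matrix κ ι R} (hK : Y * K = K' * Y) : Y * L = L' * Y :=
  calc Y * L = L' * (K' * Y) * L := by rw [← Matrix.mul_assoc L', h'.L_mul_K, Matrix.one_mul]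
    _ = L' * Y * (K * L) := by rw [← hK]; simp only [Matrix.mul_assoc]
    _ = L' * Y := by rw [h.K_mul_L, Matrix.mul_one]

-- The commutator `[E, F]` is a function of `K`, which `Y` intertwines.
theorem E_defect_intertwines_F (h : IsQuantumSl2Rep q d E F K L)
    (h' : IsQuantumSl2Rep q d E' F' K' L') {Y : Matrix κ ι R} (hF : Y * F = F' * Y)
    (hK : Y * K = K' * Y) : (Y * E - E' * Y) * F = F' * (Y * E - E' * Y) := by
  have hL := h.intertwines_L h' hK
  have hKK : Y * (K * K) = K' * K' * Y := by
    rw [← Matrix.mul_assoc, hK, Matrix.mul_assoc, hK, Matrix.mul_assoc]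
  have hLL : Y * (L * L) = L' * L' * Y := by
    rw [← Matrix.mul_assoc, hL, Matrix.mul_assoc, hL, Matrix.mul_assoc]
  have hEF : Y * E * F = F' * (Y * E) + d • (K' * K' * Y - L' * L' * Y) := by
    rw [Matrix.mul_assoc, h.E_mul_F, Matrix.mul_add, ← Matrix.mul_assoc, hF, Matrix.mul_smul,
      Matrix.mul_sub, hKK, hLL, Matrix.mul_assoc]
  have hEF' : E' * Y * F = F' * (E' * Y) + d • (K' * K' * Y - L' * L' * Y) := by
    rw [Matrix.mul_assoc, hF, ← Matrix.mul_assoc, h'.E_mul_F, Matrix.add_mul, Matrix.smul_mul,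
      Matrix.sub_mul, Matrix.mul_assoc F']
  rw [Matrix.sub_mul, Matrix.mul_sub, hEF, hEF']
  abel

end IsQuantumSl2Rep

/-! ### The modules `V^a` -/

section Modules

variable {ι κ : Type*} {n : ℕ}

lemma Emat_mul_apply_of_val_eq (X : Matrix (Fin n) κ ℂ) {i i' : Fin n} (h : (i' : ℕ) = i + 1)
    (j : κ) : (Emat n * X) i j = qint n i' * X i' j := by
  simp [Matrix.mul_apply, Emat, ← h, Fin.val_inj]

lemma mul_Fmat_apply_of_val_eq (a : ℂ) (X : Matrix ι (Fin n) ℂ) {j j' : Fin n}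
    (h : (j' : ℕ) = j + 1) (i : ι) : (X * Fmat n a) i j = X i j' * qint n (2 * a - j) := by
  simp [Matrix.mul_apply, Fmat, ← h, Fin.val_inj]

lemma mul_Emat_apply_eq_zero (X : Matrix ι (Fin n) ℂ) {j : Fin n} (hj : (j : ℕ) = 0) (i : ι) :
    (X * Emat n) i j = 0 := by
  simp [Matrix.mul_apply, Emat, hj]

-- For `i + 1 = n` both sides vanish, whatever `f n` is, because `[n] = 0`.
lemma Emat_mul_apply {X : Matrix (Fin n) κ ℂ} {j : κ} {f : ℤ → ℂ} (hf : ∀ i : Fin n, X i j = f i)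
    (i : Fin n) : (Emat n * X) i j = qint n (i + 1) * f (i + 1) := by
  by_cases h : (i : ℕ) + 1 < n
  · rw [Emat_mul_apply_of_val_eq X (i' := ⟨i + 1, h⟩) rfl, hf]
    push_cast
    rfl
  · have hi : ((i : ℕ) : ℂ) + 1 = n := by exact_mod_cast (by omega : (i : ℕ) + 1 = n)
    have hne (s : Fin n) : (s : ℕ) ≠ i + 1 := by omega
    simp [Matrix.mul_apply, Emat, hne, hi, qint_self (show n ≠ 0 by omega)]

lemma Fmat_mul_apply (a : ℂ) {X : Matrix (Fin n) κ ℂ} {j : κ} {f : ℤ → ℂ}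
    (hf : ∀ i : Fin n, X i j = f i) (hf₀ : f (-1) = 0) (i : Fin n) :
    (Fmat n a * X) i j = qint n (2 * a - i + 1) * f (i - 1) := by
  by_cases h : (i : ℕ) = 0
  · simp [Matrix.mul_apply, Fmat, h, hf₀]
  · obtain ⟨i', hi'⟩ : ∃ i' : Fin n, (i : ℕ) = i' + 1 := ⟨⟨i - 1, by omega⟩, by simp; omega⟩
    have hshift : 2 * a - ((i' : ℕ) + 1 : ℂ) + 1 = 2 * a - (i' : ℕ) := by ring
    simp [Matrix.mul_apply, Fmat, hi', Fin.val_inj, hf, hshift]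

lemma mul_Fmat_apply (a : ℂ) {X : Matrix ι (Fin n) ℂ} {i : ι} {f : ℕ → ℂ}
    (hf : ∀ j : Fin n, X i j = f j) (hfn : f n = 0) (j : Fin n) :
    (X * Fmat n a) i j = f (j + 1) * qint n (2 * a - j) := by
  by_cases h : (j : ℕ) + 1 < n
  · rw [mul_Fmat_apply_of_val_eq a X (j' := ⟨j + 1, h⟩) rfl, hf]
  · have hj : (j : ℕ) + 1 = n := by omega
    have hne (s : Fin n) : (s : ℕ) ≠ n := by omega
    simp [Matrix.mul_apply, Fmat, hj, hne, hfn]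

lemma Kmat_eq_diagonal (n : ℕ) (a : ℂ) :
    Kmat n a = Matrix.diagonal fun i : Fin n => xic n (a - (i : ℕ)) := by
  ext i j
  simp [Kmat, Matrix.diagonal_apply]

lemma Kinvmat_eq_diagonal (n : ℕ) (a : ℂ) :
    Kinvmat n a = Matrix.diagonal fun i : Fin n => xic n (-(a - (i : ℕ))) := by
  ext i j
  simp [Kinvmat, Matrix.diagonal_apply]

lemma Kmat_mul_Emat (n : ℕ) (a : ℂ) : Kmat n a * Emat n = xic n 1 • (Emat n * Kmat n a) := by
  ext i j
  rw [Kmat_eq_diagonal, Matrix.smul_apply, Matrix.mul_diagonal, Matrix.diagonal_mul, smul_eq_mul]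
  by_cases h : (j : ℕ) = i + 1
  · rw [mul_left_comm, ← xic_add, mul_comm, h]
    push_cast
    ring_nf
  · simp [Emat, h]

lemma Fmat_mul_Kmat (n : ℕ) (a : ℂ) : Fmat n a * Kmat n a = xic n 1 • (Kmat n a * Fmat n a) := by
  ext i j
  rw [Kmat_eq_diagonal, Matrix.smul_apply, Matrix.mul_diagonal, Matrix.diagonal_mul, smul_eq_mul]
  by_cases h : (i : ℕ) = j + 1
  · rw [← mul_assoc, ← xic_add, mul_comm, h]
    push_cast
    ring_nf
  · simp [Fmat, h]

lemma Emat_mul_Fmat (hn : 2 ≤ n) (a : ℂ) :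
    Emat n * Fmat n a = Fmat n a * Emat n +
      (qn n 1)⁻¹ • (Kmat n a * Kmat n a - Kinvmat n a * Kinvmat n a) := by
  ext i j
  have hEF : (Emat n * Fmat n a) i j
      = qint n (i + 1) * if (i : ℤ) + 1 = j + 1 then qint n (2 * a - j) else 0 :=
    Emat_mul_apply (f := fun s => if s = j + 1 then qint n (2 * a - j) else 0)
      (fun s => by simp only [Fmat, Matrix.of_apply]; norm_cast) i
  have hFE : (Fmat n a * Emat n) i j
      = qint n (2 * a - i + 1) * if (j : ℤ) = i - 1 + 1 then qint n j else 0 :=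
    Fmat_mul_apply a (f := fun s => if (j : ℤ) = s + 1 then qint n j else 0)
      (fun s => by simp only [Emat, Matrix.of_apply]; norm_cast) (by simp +contextual [qint_zero]) i
  rw [Matrix.add_apply, hEF, hFE, Matrix.smul_apply, Kmat_eq_diagonal, Kinvmat_eq_diagonal,
    Matrix.diagonal_mul_diagonal, Matrix.diagonal_mul_diagonal, Matrix.sub_apply]
  obtain rfl | hij := eq_or_ne i j
  · have hqn : xic n (a - i) * xic n (a - i) - xic n (-(a - i)) * xic n (-(a - i))
        = qn n (2 * a - 2 * i) := by
      rw [qn, ← xic_add, ← xic_add]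
      ring_nf
    have hcomm : qn n (i + 1) * qn n (2 * a - i)
        = qn n (2 * a - i + 1) * qn n i + qn n 1 * qn n (2 * a - 2 * i) := by
      linear_combination qn_mul_qn_sub_qn_mul_qn n i (2 * a)
    have hone := qn_one_ne_zero hn
    simp only [sub_add_cancel, if_true, Matrix.diagonal_apply_eq, smul_eq_mul, hqn, qint]
    rw [div_mul_div_comm, hcomm]
    field_simp
  · have hij' : (i : ℤ) ≠ j := by exact_mod_cast Fin.val_ne_of_ne hij
    simp [hij, hij', hij'.symm]

theorem isQuantumSl2Rep (hn : 2 ≤ n) (a : ℂ) :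
    IsQuantumSl2Rep (xic n 1) (qn n 1)⁻¹ (Emat n) (Fmat n a) (Kmat n a) (Kinvmat n a) where
  K_mul_L := by
    rw [Kmat_eq_diagonal, Kinvmat_eq_diagonal, Matrix.diagonal_mul_diagonal, ← Matrix.diagonal_one]
    exact congrArg Matrix.diagonal (funext fun i => by rw [mul_comm, xic_neg_mul_self])
  K_mul_E := Kmat_mul_Emat n a
  F_mul_K := Fmat_mul_Kmat n a
  E_mul_F := Emat_mul_Fmat hn a

-- `V^c` is generated by `e_0` under `F`, since no `[2c - t]` vanishes.
lemma eq_zero_of_mul_Fmat_eq [Fintype ι] (hn : 2 ≤ n) {c : ℂ} (hc : NotHalfInt c)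
    {D : Matrix ι (Fin n) ℂ} {A : Matrix ι ι ℂ} (hD : D * Fmat n c = A * D)
    (h₀ : ∀ p, D p ⟨0, by omega⟩ = 0) : D = 0 := by
  have hcol (t : ℕ) : ∀ (ht : t < n) (p : ι), D p ⟨t, ht⟩ = 0 := by
    induction t with
    | zero => exact fun _ => h₀
    | succ t ih =>
      intro ht p
      have hAD : (A * D) p ⟨t, by omega⟩ = 0 := by simp [Matrix.mul_apply, ih]
      rw [← hD, mul_Fmat_apply_of_val_eq c D (j' := ⟨t + 1, ht⟩) rfl] at hAD
      exact (mul_eq_zero.mp hAD).resolve_right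
        (qint_ne_zero hn (hc.qn_two_mul_sub_ne_zero (by omega) t))
  ext p t
  exact hcol t t.2 p

lemma kronecker_Kmat_mul_apply (A : Matrix (Fin n) (Fin n) ℂ) (b : ℂ)
    (X : Matrix (Fin n × Fin n) κ ℂ) (u v : Fin n) (t : κ) :
    ((A ⊗ₖ Kmat n b) * X) (u, v) t
      = xic n (b - v) * (A * Matrix.of fun u' s => X (u', v) s) u t := by
  simp only [Kmat_eq_diagonal, Matrix.mul_apply, Fintype.sum_prod_type, Matrix.kroneckerMap_apply,
    Matrix.diagonal_apply, Matrix.of_apply, mul_ite, ite_mul, mul_zero, zero_mul, sum_ite_eq,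
    mem_univ, if_true, mul_sum]
  exact sum_congr rfl fun _ _ => by ring

lemma Kinvmat_kronecker_mul_apply (B : Matrix (Fin n) (Fin n) ℂ) (a : ℂ)
    (X : Matrix (Fin n × Fin n) κ ℂ) (u v : Fin n) (t : κ) :
    ((Kinvmat n a ⊗ₖ B) * X) (u, v) t
      = xic n (-(a - u)) * (B * Matrix.of fun v' s => X (u, v') s) v t := by
  simp only [Kinvmat_eq_diagonal, Matrix.mul_apply, Fintype.sum_prod_type_right,
    Matrix.kroneckerMap_apply, Matrix.diagonal_apply, Matrix.of_apply, ite_mul, zero_mul,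
    sum_ite_eq, mem_univ, if_true, mul_sum]
  exact sum_congr rfl fun _ _ => by ring

end Modules

/-! ### Recurrences for the Clebsch–Gordan coefficients -/

section Recurrences

variable {n k : ℕ}

/-- The summand of the sum defining the Clebsch–Gordan coefficient, for `k = a + b - c`, `α = 2a`,
`β = 2b`, `γ = 2c - t + 1` and `t = z + w`. The indices `u`, `v` are integers, so that the
recurrences below can decrease them freely. -/
def cgTerm (n k : ℕ) (α β γ : ℂ) (u v : ℤ) (z w : ℕ) : ℂ :=
  (-1) ^ z * xic n ((z - w) * γ / 2) * qbin n k (u - z) * qbin n (α - u + z) (α - u) *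
    qbin n (β - v + w) (β - v)

/-- The sum over `z + w = t` in the Clebsch–Gordan coefficient, with the conventions of `cgTerm`. -/
def cgSum (n k : ℕ) (α β γ : ℂ) (u v : ℤ) (t : ℕ) : ℂ :=
  ∑ p ∈ antidiagonal t, cgTerm n k α β γ u v p.1 p.2

lemma cgTerm_eq_zero (α β γ : ℂ) {u : ℤ} (v : ℤ) {z : ℕ} (w : ℕ) (h : u - z < 0 ∨ (k : ℤ) < u - z) :
    cgTerm n k α β γ u v z w = 0 := by
  have hq := qbin_natCast_intCast_eq_zero n h
  push_cast at hq
  rw [cgTerm, hq, mul_zero, zero_mul, zero_mul]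

lemma cgTerm_succ_left (α β γ : ℂ) {u : ℤ} (v : ℤ) (z w : ℕ) (hu : u < n) :
    qn n (z + 1) * xic n (-w) * cgTerm n k α β γ u v (z + 1) w
      = -xic n ((γ - (z + w)) / 2) * qn n (α - u + 1) *
          cgTerm n k α β (γ + 1) (u - 1) v z w := by
  by_cases hz : z + 1 < n
  · have hxic : xic n (-w) * xic n ((z + 1 - w) * γ / 2)
        = xic n ((γ - (z + w)) / 2) * xic n ((z - w) * (γ + 1) / 2) := by
      rw [← xic_add, ← xic_add]
      ring_nf
    have hqbin := qn_mul_qbin (x := α - u + (z + 1)) (y := α - u) hz (by ring)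
    have hk : (u : ℂ) - 1 - z = u - (z + 1) := by ring
    have hα : α - ((u : ℂ) - 1) = α - u + 1 := by ring
    have hα' : α - u + 1 + z = α - u + (z + 1 : ℂ) := by ring
    simp only [cgTerm, Int.cast_sub, Int.cast_one, Nat.cast_add, Nat.cast_one, hk, hα, hα',
      pow_succ]
    linear_combination (-(-1) ^ z * qbin n k (u - (z + 1)) * qbin n (β - v + w) (β - v)) *
      (xic n (-w) * xic n ((z + 1 - w) * γ / 2) * hqbin +
        qn n (α - u + 1) * qbin n (α - u + (z + 1)) (α - u + 1) * hxic)
  · rw [cgTerm_eq_zero _ _ _ _ _ (by push_cast; omega), cgTerm_eq_zero _ _ _ _ _ (by omega),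
      mul_zero, mul_zero]

lemma cgTerm_succ_right (α β γ : ℂ) {u v : ℤ} {z w : ℕ} (hv : v < n) (huv : u + v = z + w + 1 + k) :
    qn n (w + 1) * xic n z * cgTerm n k α β γ u v z (w + 1)
      = xic n (-((γ - (z + w)) / 2)) * qn n (β - v + 1) *
          cgTerm n k α β (γ + 1) u (v - 1) z w := by
  by_cases hw : w + 1 < n
  · have hxic : xic n z * xic n ((z - (w + 1)) * γ / 2)
        = xic n (-((γ - (z + w)) / 2)) * xic n ((z - w) * (γ + 1) / 2) := by
      rw [← xic_add, ← xic_add]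
      ring_nf
    have hqbin := qn_mul_qbin (x := β - v + (w + 1)) (y := β - v) hw (by ring)
    have hβ : β - ((v : ℂ) - 1) = β - v + 1 := by ring
    have hβ' : β - v + 1 + w = β - v + (w + 1 : ℂ) := by ring
    simp only [cgTerm, Int.cast_sub, Int.cast_one, Nat.cast_add, Nat.cast_one, hβ, hβ']
    linear_combination ((-1) ^ z * qbin n k (u - z) * qbin n (α - u + z) (α - u)) *
      (xic n z * xic n ((z - (w + 1)) * γ / 2) * hqbin +
        qn n (β - v + 1) * qbin n (β - v + (w + 1)) (β - v + 1) * hxic)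
  · rw [cgTerm_eq_zero _ _ _ _ _ (by omega), cgTerm_eq_zero _ _ _ _ _ (by omega),
      mul_zero, mul_zero]

-- Split `{z + w} = {z} ξ^{-w} + {w} ξ^z` in each summand and absorb `{z}` and `{w}` into the
-- second and the third binomial.
lemma cgSum_succ (α β γ : ℂ) {u v : ℤ} {t : ℕ} (hu : u < n) (hv : v < n)
    (huv : u + v = t + 1 + k) :
    qn n (t + 1) * cgSum n k α β γ u v (t + 1)
      = -xic n ((γ - t) / 2) * qn n (α - u + 1) * cgSum n k α β (γ + 1) (u - 1) v t
        + xic n (-((γ - t) / 2)) * qn n (β - v + 1) * cgSum n k α β (γ + 1) u (v - 1) t := by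
  have hsplit : qn n (t + 1) * cgSum n k α β γ u v (t + 1)
      = ∑ p ∈ antidiagonal (t + 1), qn n p.1 * xic n (-p.2) * cgTerm n k α β γ u v p.1 p.2
        + ∑ p ∈ antidiagonal (t + 1), qn n p.2 * xic n p.1 * cgTerm n k α β γ u v p.1 p.2 := by
    rw [cgSum, mul_sum, ← sum_add_distrib]
    refine sum_congr rfl fun p hp => ?_
    have hp' : (t : ℂ) + 1 = p.1 + p.2 := by exact_mod_cast (mem_antidiagonal.mp hp).symm
    rw [hp', qn_add]
    ring
  rw [hsplit, Nat.sum_antidiagonal_succ, Nat.sum_antidiagonal_succ']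
  simp only [Nat.cast_zero, qn_zero, zero_mul, zero_add, Nat.cast_add, Nat.cast_one, cgSum, mul_sum]
  congr 1 <;> refine sum_congr rfl fun p hp => ?_
  all_goals
    have hp' := mem_antidiagonal.mp hp
    have hpt : (t : ℂ) = p.1 + p.2 := by exact_mod_cast hp'.symm
    rw [hpt]
  · exact cgTerm_succ_left α β γ v p.1 p.2 hu
  · exact cgTerm_succ_right α β γ hv (by omega)

lemma cgSum_zero_right (hn : n ≠ 0) (α β γ : ℂ) (u v : ℤ) :
    cgSum n k α β γ u v 0 = qbin n k u := by
  simp [cgSum, cgTerm, qbin_self hn, xic_zero]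

lemma cgSum_eq_zero (α β γ : ℂ) {u v : ℤ} {t : ℕ} (huv : u + v = t + k) (h : u < 0 ∨ v < 0) :
    cgSum n k α β γ u v t = 0 := by
  refine sum_eq_zero fun p hp => cgTerm_eq_zero _ _ _ _ _ ?_
  have hp' := mem_antidiagonal.mp hp
  omega

/-- The factor of the Clebsch–Gordan coefficient depending on `u` and `v` only. -/
def cgPhase (n : ℕ) (a b : ℂ) (u v : ℤ) : ℂ :=
  (-1) ^ v * xic n ((v * (2 * b - v + 1) - u * (2 * a - u + 1)) / 2)

lemma cgPhase_ne_zero (n : ℕ) (a b : ℂ) (u v : ℤ) : cgPhase n a b u v ≠ 0 :=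
  mul_ne_zero (zpow_ne_zero _ (by norm_num)) (xic_ne_zero _ _)

lemma cgPhase_add_one_left (n : ℕ) (a b : ℂ) (u v : ℤ) :
    cgPhase n a b (u + 1) v = xic n (-(a - u)) * cgPhase n a b u v := by
  rw [cgPhase, cgPhase, mul_left_comm, ← xic_add]
  push_cast
  ring_nf

lemma cgPhase_add_one_right (n : ℕ) (a b : ℂ) (u v : ℤ) :
    cgPhase n a b u (v + 1) = -(xic n (b - v) * cgPhase n a b u v) := by
  rw [cgPhase, cgPhase, mul_left_comm, ← xic_add, zpow_add_one₀ (by norm_num)]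
  push_cast
  ring_nf

lemma xic_mul_cgPhase_sub_one_left (n : ℕ) (a b : ℂ) (u v : ℤ) :
    xic n (b - v) * cgPhase n a b (u - 1) v
      = xic n (a + b - u - v + 1) * cgPhase n a b u v := by
  have h := cgPhase_add_one_left n a b (u - 1) v
  rw [sub_add_cancel] at h
  rw [h, ← mul_assoc, ← xic_add]
  push_cast
  ring_nf

lemma xic_mul_cgPhase_sub_one_right (n : ℕ) (a b : ℂ) (u v : ℤ) :
    xic n (-(a - u)) * cgPhase n a b u (v - 1)
      = -(xic n (-(a + b - u - v + 1)) * cgPhase n a b u v) := by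
  have h := cgPhase_add_one_right n a b u (v - 1)
  rw [sub_add_cancel] at h
  rw [h, mul_neg, neg_neg, ← mul_assoc, ← xic_add]
  push_cast
  ring_nf

/-- The factor of the Clebsch–Gordan coefficient depending on `t` only. -/
def cgScalar (n : ℕ) (a b c : ℂ) (t : ℕ) : ℂ :=
  Complex.exp (Real.pi * Complex.I * (c - a - b) / 2) * qbin n (2 * c) (a + b + c - (n - 1)) *
    ((-1) ^ t * (qbin n (2 * c) (2 * c - t))⁻¹)

lemma qn_mul_cgScalar_succ {c : ℂ} (hc : NotHalfInt c) (a b : ℂ) {t : ℕ} (ht : t + 1 < n) :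
    qn n (2 * c - t) * cgScalar n a b c (t + 1) = -(qn n (t + 1) * cgScalar n a b c t) := by
  have hqbin := qn_mul_qbin (x := 2 * c) (y := 2 * c - (t + 1)) ht (by ring)
  rw [show 2 * c - ((t : ℂ) + 1) + 1 = 2 * c - t by ring] at hqbin
  have ht₀ : qbin n (2 * c) (2 * c - t) ≠ 0 :=
    hc.qbin_two_mul_ne_zero (m := t) (by omega) (by ring)
  have ht₁ : qbin n (2 * c) (2 * c - (t + 1)) ≠ 0 :=
    hc.qbin_two_mul_ne_zero ht (by push_cast; ring)
  simp only [cgScalar, Nat.cast_add, Nat.cast_one, pow_succ]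
  field_simp
  linear_combination qbin n (2 * c) (a + b + c - (n - 1)) * hqbin

lemma cgScalar_zero_ne_zero {a b c : ℂ} (hc : NotHalfInt c) (hk : k < n) (h : a + b - c = k) :
    cgScalar n a b c 0 ≠ 0 := by
  have hn : ((n - 1 - k : ℕ) : ℂ) = n - 1 - k := by
    rw [Nat.sub_sub, Nat.cast_sub (by omega)]
    push_cast
    ring
  have hnorm : qbin n (2 * c) (a + b + c - (n - 1)) ≠ 0 :=
    hc.qbin_two_mul_ne_zero (m := n - 1 - k) (by omega) (by rw [hn]; linear_combination -h)
  simp [cgScalar, hnorm, qbin_self (show n ≠ 0 by omega)]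

/-- The Clebsch–Gordan coefficient for `k = a + b - c`, extended to integers `u`, `v` and by zero
off the weight condition `u + v = t + k`. -/
def cgExt (n k : ℕ) (a b c : ℂ) (u v : ℤ) (t : ℕ) : ℂ :=
  if u + v = t + k then
    cgScalar n a b c t * cgPhase n a b u v * cgSum n k (2 * a) (2 * b) (2 * c - t + 1) u v t
  else 0

lemma CG_eq {a b c : ℂ} (h : a + b - c = k) (u v t : ℕ) :
    CG n a b c u v t = cgScalar n a b c t * cgPhase n a b u v *
      cgSum n k (2 * a) (2 * b) (2 * c - t + 1) u v t := by
  have hsign : (-1 : ℂ) ^ ((v : ℤ) - t) = (-1) ^ t * (-1) ^ (v : ℤ) := by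
    rw [zpow_sub₀ (by norm_num), zpow_natCast, zpow_natCast, div_eq_mul_inv, ← inv_pow, mul_comm]
    norm_num
  have hsum : cgSum n k (2 * a) (2 * b) (2 * c - t + 1) u v t
      = ∑ z ∈ range (t + 1), (-1 : ℂ) ^ z * xic n ((2 * z - t) * (2 * c - t + 1) / 2) *
          qbin n (a + b - c) (u - z) * qbin n (2 * a - u + z) (2 * a - u) *
          qbin n (2 * b - v + (t - z)) (2 * b - v) := by
    rw [cgSum, Nat.sum_antidiagonal_eq_sum_range_succ_mk]
    refine sum_congr rfl fun z hz => ?_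
    have hzt : z ≤ t := Nat.lt_succ_iff.mp (mem_range.mp hz)
    simp only [cgTerm, Nat.cast_sub hzt, Int.cast_natCast, h]
    ring_nf
  rw [CG, hsign, ← hsum, cgScalar, cgPhase]
  push_cast
  ring

lemma Yinc_apply {a b c : ℂ} (h : a + b - c = k) (u v t : Fin n) :
    Yinc n a b c (u, v) t = cgExt n k a b c u v t := by
  have hweight : ((u : ℕ) : ℂ) + (v : ℕ) - (t : ℕ) = k ↔ ((u : ℕ) : ℤ) + (v : ℕ) = (t : ℕ) + k := by
    rw [sub_eq_iff_eq_add']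
    norm_cast
  simp only [Yinc, Matrix.of_apply, CG_eq h, h, hweight, cgExt]

lemma cgExt_eq_zero (a b c : ℂ) {u v : ℤ} (t : ℕ) (h : u < 0 ∨ v < 0) :
    cgExt n k a b c u v t = 0 := by
  rw [cgExt, ite_eq_right_iff]
  intro huv
  rw [cgSum_eq_zero _ _ _ huv h, mul_zero]

lemma cgExt_zero_left_ne_zero {a b c : ℂ} (hc : NotHalfInt c) (hk : k < n) (h : a + b - c = k) :
    cgExt n k a b c 0 k 0 ≠ 0 := by
  rw [cgExt, if_pos (by simp), cgSum_zero_right (by omega), Int.cast_zero]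
  exact mul_ne_zero (mul_ne_zero (cgScalar_zero_ne_zero hc hk h) (cgPhase_ne_zero _ _ _ _ _))
    (qbin_natCast_zero_ne_zero hk)

-- The left side is a multiple of `{t + 1}`, which vanishes at the cut `t + 1 = n`.
theorem cgExt_succ {a b c : ℂ} (hc : NotHalfInt c) (h : a + b - c = k) {u v : ℤ} {t : ℕ}
    (hu : u < n) (hv : v < n) (ht : t < n) :
    qn n (2 * c - t) * (if t + 1 < n then cgExt n k a b c u v (t + 1) else 0)
      = xic n (b - v) * qn n (2 * a - u + 1) * cgExt n k a b c (u - 1) v t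
        + xic n (-(a - u)) * qn n (2 * b - v + 1) * cgExt n k a b c u (v - 1) t := by
  by_cases huv : u + v = t + 1 + k
  · have hct : a + b - u - v + 1 = c - t := by
      have huv' : (u : ℂ) + v = t + 1 + k := by exact_mod_cast huv
      linear_combination h - huv'
    have hleft := xic_mul_cgPhase_sub_one_left n a b u v
    have hright := xic_mul_cgPhase_sub_one_right n a b u v
    have hsum := cgSum_succ (2 * a) (2 * b) (2 * c - t) hu hv huv
    rw [hct] at hleft hright
    rw [show (2 * c - (t : ℂ) - t) / 2 = c - t by ring] at hsum
    have hcut : qn n (2 * c - t) * (if t + 1 < n then cgExt n k a b c u v (t + 1) else 0)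
        = -cgScalar n a b c t * cgPhase n a b u v *
            (qn n (t + 1) * cgSum n k (2 * a) (2 * b) (2 * c - t) u v (t + 1)) := by
      split_ifs with ht'
      · rw [cgExt, if_pos (by push_cast; exact huv),
          show 2 * c - ((t + 1 : ℕ) : ℂ) + 1 = 2 * c - t by push_cast; ring]
        linear_combination cgPhase n a b u v *
          cgSum n k (2 * a) (2 * b) (2 * c - t) u v (t + 1) * qn_mul_cgScalar_succ hc a b ht'
      · have htn : (t : ℂ) + 1 = n := by exact_mod_cast (by omega : t + 1 = n)
        rw [htn, qn_self (by omega), zero_mul, mul_zero, mul_zero]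
    rw [hcut, hsum, cgExt, cgExt, if_pos (by omega), if_pos (by omega)]
    linear_combination -cgScalar n a b c t *
      (qn n (2 * a - u + 1) * cgSum n k (2 * a) (2 * b) (2 * c - t + 1) (u - 1) v t * hleft +
        qn n (2 * b - v + 1) * cgSum n k (2 * a) (2 * b) (2 * c - t + 1) u (v - 1) t * hright)
  · have hmid : cgExt n k a b c u v (t + 1) = 0 := if_neg (by push_cast; exact huv)
    have hleft : cgExt n k a b c (u - 1) v t = 0 := if_neg (by omega)
    have hright : cgExt n k a b c u (v - 1) t = 0 := if_neg (by omega)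
    simp [hmid, hleft, hright]

theorem cgExt_highest_weight (a b c : ℂ) (hk : k < n) (u v : ℕ) :
    xic n (b - v) * qn n (u + 1) * cgExt n k a b c (u + 1) v 0
      + xic n (-(a - u)) * qn n (v + 1) * cgExt n k a b c u (v + 1) 0 = 0 := by
  by_cases huv : u + v + 1 = k
  · have hleft := cgPhase_add_one_left n a b u v
    have hright := cgPhase_add_one_right n a b u v
    have hqbin := qn_mul_qbin (x := k) (y := u) (m := v) (n := n) (by omega)
      (by rw [← huv]; push_cast; ring)
    simp only [Int.cast_natCast] at hleft hright
    rw [cgExt, cgExt, if_pos (by push_cast; omega), if_pos (by push_cast; omega),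
      cgSum_zero_right (by omega), cgSum_zero_right (by omega), hleft, hright]
    push_cast
    linear_combination (-cgScalar n a b c 0 * cgPhase n a b u v * xic n (b - v) *
      xic n (-(a - u))) * hqbin
  · rw [cgExt, cgExt, if_neg (by push_cast; omega), if_neg (by push_cast; omega), mul_zero,
      mul_zero, add_zero]

end Recurrences

/-! ### The intertwining relations and uniqueness -/

section Intertwining

variable {n k : ℕ} {a b c : ℂ}

theorem Yinc_mul_Kmat (n : ℕ) (a b c : ℂ) :
    Yinc n a b c * Kmat n c = (Kmat n a ⊗ₖ Kmat n b) * Yinc n a b c := by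
  ext ⟨u, v⟩ t
  simp only [Kmat_eq_diagonal, Matrix.diagonal_kronecker_diagonal, Matrix.mul_diagonal,
    Matrix.diagonal_mul, Yinc, Matrix.of_apply]
  split_ifs with huv
  · rw [← xic_add, mul_comm]
    congr 2
    linear_combination huv
  · simp

theorem Yinc_mul_Fmat (hc : NotHalfInt c) (h : a + b - c = k) :
    Yinc n a b c * Fmat n c
      = (Fmat n a ⊗ₖ Kmat n b + Kinvmat n a ⊗ₖ Fmat n b) * Yinc n a b c := by
  ext ⟨u, v⟩ t
  have hrec := cgExt_succ hc h (u := (u : ℕ)) (v := (v : ℕ)) (by exact_mod_cast u.2)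
    (by exact_mod_cast v.2) t.2
  have hY := mul_Fmat_apply c (X := Yinc n a b c) (i := (u, v))
    (f := fun t => if t < n then cgExt n k a b c u v t else 0)
    (fun t => by simp [Yinc_apply h]) (by simp) t
  have hl := Fmat_mul_apply a (X := Matrix.of fun u' s => Yinc n a b c (u', v) s) (j := t)
    (f := fun u' => cgExt n k a b c u' v t) (fun u' => Yinc_apply h u' v t)
    (cgExt_eq_zero a b c t (by simp)) u
  have hr := Fmat_mul_apply b (X := Matrix.of fun v' s => Yinc n a b c (u, v') s) (j := t)
    (f := fun v' => cgExt n k a b c u v' t) (fun v' => Yinc_apply h u v' t)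
    (cgExt_eq_zero a b c t (by simp)) v
  rw [Matrix.add_mul, Matrix.add_apply, kronecker_Kmat_mul_apply, Kinvmat_kronecker_mul_apply,
    hY, hl, hr]
  simp only [Int.cast_natCast] at hrec
  simp only [qint]
  linear_combination (qn n 1)⁻¹ * hrec

theorem Yinc_mul_Emat (hn : 2 ≤ n) (hc : NotHalfInt c) (hk : k < n) (h : a + b - c = k) :
    Yinc n a b c * Emat n
      = (Emat n ⊗ₖ Kmat n b + Kinvmat n a ⊗ₖ Emat n) * Yinc n a b c := by
  have hdefect := (isQuantumSl2Rep hn c).E_defect_intertwines_F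
    ((isQuantumSl2Rep hn a).tensor (isQuantumSl2Rep hn b)) (Yinc_mul_Fmat hc h)
    (Yinc_mul_Kmat n a b c)
  refine sub_eq_zero.mp (eq_zero_of_mul_Fmat_eq hn hc hdefect ?_)
  rintro ⟨u, v⟩
  have hl := Emat_mul_apply (X := Matrix.of fun u' s => Yinc n a b c (u', v) s)
    (j := ⟨0, by omega⟩) (f := fun u' => cgExt n k a b c u' v 0)
    (fun u' => Yinc_apply h u' v ⟨0, by omega⟩) u
  have hr := Emat_mul_apply (X := Matrix.of fun v' s => Yinc n a b c (u, v') s)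
    (j := ⟨0, by omega⟩) (f := fun v' => cgExt n k a b c u v' 0)
    (fun v' => Yinc_apply h u v' ⟨0, by omega⟩) v
  rw [Matrix.sub_apply, mul_Emat_apply_eq_zero _ rfl, Matrix.add_mul, Matrix.add_apply,
    kronecker_Kmat_mul_apply, Kinvmat_kronecker_mul_apply, hl, hr]
  simp only [qint]
  linear_combination (-(qn n 1)⁻¹) * cgExt_highest_weight a b c hk u v

lemma apply_eq_zero_of_mul_Kmat_eq (hk : k < n) (h : a + b - c = k)
    {M : Matrix (Fin n × Fin n) (Fin n) ℂ} (hM : M * Kmat n c = (Kmat n a ⊗ₖ Kmat n b) * M)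
    {u v t : Fin n} (huv : (u : ℕ) + v ≠ t + k) : M (u, v) t = 0 := by
  have hweight := congrFun₂ hM (u, v) t
  simp only [Kmat_eq_diagonal, Matrix.diagonal_kronecker_diagonal, Matrix.mul_diagonal,
    Matrix.diagonal_mul, ← xic_add, mul_comm (M (u, v) t)] at hweight
  refine (mul_eq_mul_right_iff.mp hweight).resolve_left fun hxic => huv ?_
  obtain ⟨m, hm⟩ := (xic_eq_xic_iff (by omega)).mp hxic
  have hm' : ((u + v : ℕ) : ℤ) - (t + k : ℕ) = (2 * n : ℕ) * m := by
    have : ((u + v : ℕ) : ℂ) - (t + k : ℕ) = (2 * n : ℕ) * m := by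
      push_cast
      linear_combination hm + h
    exact_mod_cast this
  have hmod : t + k ≡ u + v [MOD 2 * n] :=
    Int.natCast_modEq_iff.mp (Int.modEq_iff_dvd.mpr ⟨m, hm'⟩)
  exact (hmod.eq_of_lt_of_lt (by omega) (by omega)).symm

lemma apply_zero_eq_zero_of_mul_Emat_eq (hn : 2 ≤ n) (hk : k < n)
    {M : Matrix (Fin n × Fin n) (Fin n) ℂ}
    (hE : M * Emat n = (Emat n ⊗ₖ Kmat n b + Kinvmat n a ⊗ₖ Emat n) * M)
    (h₀ : M (⟨0, by omega⟩, ⟨k, hk⟩) ⟨0, by omega⟩ = 0) (u : ℕ) :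
    ∀ (v : ℕ) (hu : u < n) (hv : v < n), u + v = k → M (⟨u, hu⟩, ⟨v, hv⟩) ⟨0, by omega⟩ = 0 := by
  induction u with
  | zero =>
    rintro v - - rfl
    simpa using h₀
  | succ u ih =>
    intro v hu hv huv
    have hE₀ := congrFun₂ hE (⟨u, by omega⟩, ⟨v, hv⟩) ⟨0, by omega⟩
    rw [mul_Emat_apply_eq_zero _ rfl, Matrix.add_mul, Matrix.add_apply, kronecker_Kmat_mul_apply,
      Kinvmat_kronecker_mul_apply, Emat_mul_apply_of_val_eq _ (i' := ⟨u + 1, hu⟩) rfl,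
      Emat_mul_apply_of_val_eq _ (i' := ⟨v + 1, by omega⟩) rfl, Matrix.of_apply, Matrix.of_apply,
      ih (v + 1) (by omega) (by omega) (by omega), mul_zero, mul_zero, add_zero] at hE₀
    have hqint : qint n ((u + 1 : ℕ) : ℂ) ≠ 0 :=
      qint_ne_zero hn (qn_natCast_ne_zero u.succ_pos hu)
    exact (mul_eq_zero.mp ((mul_eq_zero.mp hE₀.symm).resolve_left (xic_ne_zero _ _))).resolve_left
      hqint

theorem eq_zero_of_intertwines (hn : 2 ≤ n) (hc : NotHalfInt c) (hk : k < n) (h : a + b - c = k)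
    {M : Matrix (Fin n × Fin n) (Fin n) ℂ}
    (hE : M * Emat n = (Emat n ⊗ₖ Kmat n b + Kinvmat n a ⊗ₖ Emat n) * M)
    (hF : M * Fmat n c = (Fmat n a ⊗ₖ Kmat n b + Kinvmat n a ⊗ₖ Fmat n b) * M)
    (hK : M * Kmat n c = (Kmat n a ⊗ₖ Kmat n b) * M)
    (h₀ : M (⟨0, by omega⟩, ⟨k, hk⟩) ⟨0, by omega⟩ = 0) : M = 0 := by
  refine eq_zero_of_mul_Fmat_eq hn hc hF ?_
  rintro ⟨u, v⟩
  by_cases huv : (u : ℕ) + v = k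
  · exact apply_zero_eq_zero_of_mul_Emat_eq hn hk hE h₀ u v u.2 v.2 huv
  · exact apply_eq_zero_of_mul_Kmat_eq hk h hK (by simpa using huv)

lemma sub_smul_intertwines {R ι κ : Type*} [CommRing R] [Fintype ι] [Fintype κ]
    {M Y : Matrix κ ι R} {A : Matrix ι ι R} {B : Matrix κ κ R} (hM : M * A = B * M)
    (hY : Y * A = B * Y) (s : R) : (M - s • Y) * A = B * (M - s • Y) := by
  rw [Matrix.sub_mul, Matrix.mul_sub, Matrix.smul_mul, Matrix.mul_smul, hM, hY]

end Intertwining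

theorem Yinc_module_map_and_unique_general (n : ℕ) (hn : 2 ≤ n) (a b c : ℂ) (hc : NotHalfInt c)
    (habc : InZn n (a + b - c)) :
    (Yinc n a b c * Emat n
        = (Emat n ⊗ₖ Kmat n b + Kinvmat n a ⊗ₖ Emat n) * Yinc n a b c ∧
     Yinc n a b c * Fmat n c
        = (Fmat n a ⊗ₖ Kmat n b + Kinvmat n a ⊗ₖ Fmat n b) * Yinc n a b c ∧
     Yinc n a b c * Kmat n c = (Kmat n a ⊗ₖ Kmat n b) * Yinc n a b c) ∧
    ∀ M : Matrix (Fin n × Fin n) (Fin n) ℂ,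
      M * Emat n = (Emat n ⊗ₖ Kmat n b + Kinvmat n a ⊗ₖ Emat n) * M →
      M * Fmat n c = (Fmat n a ⊗ₖ Kmat n b + Kinvmat n a ⊗ₖ Fmat n b) * M →
      M * Kmat n c = (Kmat n a ⊗ₖ Kmat n b) * M →
      ∃ s : ℂ, M = s • Yinc n a b c := by
  obtain ⟨k, hk, h⟩ := habc
  have hE := Yinc_mul_Emat hn hc hk h
  have hF := Yinc_mul_Fmat (n := n) hc h
  have hK := Yinc_mul_Kmat n a b c
  refine ⟨⟨hE, hF, hK⟩, fun M hME hMF hMK => ?_⟩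
  have hY₀ : Yinc n a b c (⟨0, by omega⟩, ⟨k, hk⟩) ⟨0, by omega⟩ ≠ 0 := by
    simpa [Yinc_apply h] using cgExt_zero_left_ne_zero hc hk h
  refine ⟨M (⟨0, by omega⟩, ⟨k, hk⟩) ⟨0, by omega⟩ /
    Yinc n a b c (⟨0, by omega⟩, ⟨k, hk⟩) ⟨0, by omega⟩, sub_eq_zero.mp ?_⟩
  exact eq_zero_of_intertwines hn hc hk h (sub_smul_intertwines hME hE _)
    (sub_smul_intertwines hMF hF _) (sub_smul_intertwines hMK hK _) (by simp [hY₀])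

theorem Yinc_module_map_and_unique (n : ℕ) (hn : 2 ≤ n) (a b c : ℂ)
    (ha : NotHalfInt a) (hb : NotHalfInt b) (hc : NotHalfInt c)
    (habc : InZn n (a + b - c)) :
    (Yinc n a b c * Emat n
        = (Emat n ⊗ₖ Kmat n b + Kinvmat n a ⊗ₖ Emat n) * Yinc n a b c ∧
     Yinc n a b c * Fmat n c
        = (Fmat n a ⊗ₖ Kmat n b + Kinvmat n a ⊗ₖ Fmat n b) * Yinc n a b c ∧
     Yinc n a b c * Kmat n c = (Kmat n a ⊗ₖ Kmat n b) * Yinc n a b c) ∧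
    (NotHalfInt (a + b) →
      ∀ M : Matrix (Fin n × Fin n) (Fin n) ℂ,
        M * Emat n = (Emat n ⊗ₖ Kmat n b + Kinvmat n a ⊗ₖ Emat n) * M →
        M * Fmat n c = (Fmat n a ⊗ₖ Kmat n b + Kinvmat n a ⊗ₖ Fmat n b) * M →
        M * Kmat n c = (Kmat n a ⊗ₖ Kmat n b) * M →
        ∃ s : ℂ, M = s • Yinc n a b c) :=
  (Yinc_module_map_and_unique_general n hn a b c hc habc).imp_right fun hM _ => hM

end
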